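/- arXiv:1909.11219 — 3 statements merged into one kernel-verified Lean document; each statement's English description precedes it below -/
import Mathlib

section
/- Classical envelope theorem and converse: Under the basic and classical assumptions, a Lipschitz continuous decision rule X : [0,1] → 𝒳 satisfies the first-order condition a.e. if and only if it satisfies the envelope formula. -/
/-! Write `G a b = f (X a) b` (with both arguments clamped to `[0,1]`) and `V t = G t t`. The bound
on `f₁` makes `f` Lipschitz in the action, so `G` is Lipschitz in `a`, uniformly in `b`, and
jointly continuous. Since `f` need not be jointly differentiable, `V` cannot simply be
differentiated by the chain rule. Instead, the quotients of
`V (s + m) - V s = (G s (s + m) - G s s) + (G (s + m) (s + m) - G s (s + m))`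
are integrated over `[r, t] ⊆ (0,1)` before letting `m ↓ 0`:

* the left side tends to `V t - V r`, as `V` is continuous (`tendsto_integral_diag_quotient`);
* the first bracket, divided by `m`, converges pointwise to `f₂ (X s) s` and is uniformly
  integrable by absolute equi-continuity, so Vitali's theorem applies (`tendsto_integral_fwd`);
* the second becomes, after translating by `m`, a bounded backward quotient in the action, which
  converges to `g s = f₁ (X s) s (X' s)` wherever `X` is differentiable, that is, a.e., so
  dominated convergence applies (`tendsto_integral_bwd_shift`).

Hence `V t = V 0 + ∫₀ᵗ f₂ (X s) s ds + ∫₀ᵗ g s ds` (`diag_eq`). The envelope formula therefore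
says that `∫₀ᵗ g = 0` for all `t`, which by Lebesgue differentiation means `g = 0` a.e.
(`envelope_iff`), and this is the first-order condition a.e.
-/

open MeasureTheory Set Filter intervalIntegral

/-- A family `{φ x}` of functions `[0,1] → ℝ` is *absolutely equi-continuous* iff the family
of divided-difference suprema `t ↦ sup_x |(φ x (t+m) − φ x t)/m|` (for `m > 0`, each defined on
`{t ∈ [0,1] : t + m ∈ [0,1]}`) is uniformly integrable. -/
def AbsolutelyEquicontinuous {𝒳 : Type*} (φ : 𝒳 → ℝ → ℝ) : Prop :=
  ∀ ε > (0 : ℝ), ∃ δ > (0 : ℝ), ∀ T : Set ℝ, IsOpen T → T ⊆ Icc 0 1 →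
    volume T < ENNReal.ofReal δ → ∀ m : ℝ, 0 < m →
      ∫⁻ t in T ∩ {t : ℝ | t ∈ Icc (0:ℝ) 1 ∧ t + m ∈ Icc (0:ℝ) 1},
        ⨆ x, ENNReal.ofReal |(φ x (t + m) - φ x t) / m| < ENNReal.ofReal ε

open scoped Topology ENNReal

/-! ### Difference quotients in the parameter -/

/-- The step sizes `1 / (k + 1)` along which all difference quotients are taken. -/
noncomputable def step (k : ℕ) : ℝ := 1 / ((k : ℝ) + 1)

lemma step_pos (k : ℕ) : 0 < step k := by unfold step; positivity

lemma tendsto_step : Tendsto step atTop (𝓝[>] 0) :=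
  tendsto_nhdsWithin_iff.2 ⟨tendsto_one_div_add_atTop_nhds_zero_nat,
    Eventually.of_forall step_pos⟩

/-- The forward difference quotient of `G s ·` at `s` with step `step k`, set to zero where the
evaluation point `s + step k` leaves `[0,1]`. -/
noncomputable def fwd (G : ℝ → ℝ → ℝ) (k : ℕ) : ℝ → ℝ :=
  (Iic (1 - step k)).indicator fun s => (step k)⁻¹ * (G s (s + step k) - G s s)

/-- The uniform integrability of the difference quotients of `G` in its second argument along
the diagonal. -/
def DiagUI (G : ℝ → ℝ → ℝ) : Prop :=
  ∀ ε > (0 : ℝ), ∃ δ > (0 : ℝ), ∀ T : Set ℝ, IsOpen T → T ⊆ Icc 0 1 →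
    volume T < ENNReal.ofReal δ → ∀ m : ℝ, 0 < m →
      ∫⁻ t in T ∩ {t : ℝ | t ∈ Icc (0:ℝ) 1 ∧ t + m ∈ Icc (0:ℝ) 1},
        ENNReal.ofReal |(G t (t + m) - G t t) / m| < ENNReal.ofReal ε

section Abstract

variable {G : ℝ → ℝ → ℝ} {φ g : ℝ → ℝ} {C : ℝ}

/-- Outer regularity passes from open sets to measurable ones. -/
lemma DiagUI.lintegral_fwd_le (hUI : DiagUI G) {ε : ℝ} (hε : 0 < ε) :
    ∃ δ > (0 : ℝ), ∀ S : Set ℝ, volume (S ∩ Ioo 0 1) < ENNReal.ofReal δ →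
      ∀ k, ∫⁻ s in S ∩ Ioo 0 1, ‖fwd G k s‖ₑ ≤ ENNReal.ofReal ε := by
  obtain ⟨δ, hδ, h⟩ := hUI ε hε
  refine ⟨δ, hδ, fun S hS k => ?_⟩
  obtain ⟨U, hSU, hUo, hU⟩ := Set.exists_isOpen_lt_of_lt _ _ hS
  have hT := h (U ∩ Ioo 0 1) (hUo.inter isOpen_Ioo)
    (inter_subset_right.trans Ioo_subset_Icc_self)
    ((measure_mono inter_subset_left).trans_lt hU) (step k) (step_pos k)
  refine le_trans ?_ hT.le
  have hset : (U ∩ Ioo (0:ℝ) 1) ∩ {t : ℝ | t ∈ Icc (0:ℝ) 1 ∧ t + step k ∈ Icc (0:ℝ) 1}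
      = Iic (1 - step k) ∩ (U ∩ Ioo 0 1) := by
    ext t
    have := step_pos k
    simp only [mem_inter_iff, mem_Ioo, mem_ofPred_eq, mem_Icc, mem_Iic]
    constructor
    · rintro ⟨⟨h1, h2, h3⟩, -, h4⟩
      exact ⟨by linarith, h1, h2, h3⟩
    · rintro ⟨h4, h1, h2, h3⟩
      exact ⟨⟨h1, h2, h3⟩, ⟨h2.le, h3.le⟩, by linarith, by linarith⟩
  rw [hset, ← Measure.restrict_restrict measurableSet_Iic,
    ← lintegral_indicator measurableSet_Iic]
  refine (lintegral_mono_set (t := U ∩ Ioo 0 1) (subset_inter hSU inter_subset_right)).trans ?_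
  refine lintegral_mono fun s => ?_
  unfold fwd
  rw [enorm_indicator_eq_indicator_enorm]
  refine indicator_le_indicator ?_
  rw [← ofReal_norm, Real.norm_eq_abs, div_eq_inv_mul]

lemma measurable_fwd (hG : Continuous fun p : ℝ × ℝ => G p.1 p.2) (k : ℕ) :
    Measurable (fwd G k) := by
  refine Measurable.indicator (Continuous.measurable ?_) measurableSet_Iic
  have h1 : Continuous fun s : ℝ => G s (s + step k) :=
    hG.comp (continuous_id.prodMk (continuous_id.add continuous_const))
  have h2 : Continuous fun s : ℝ => G s s := hG.comp (continuous_id.prodMk continuous_id)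
  exact continuous_const.mul (h1.sub h2)

lemma tendsto_fwd {s : ℝ} (hs : s ∈ Ioo (0:ℝ) 1) (h : HasDerivAt (fun b => G s b) (φ s) s) :
    Tendsto (fun k => fwd G k s) atTop (𝓝 (φ s)) := by
  have h1 := h.tendsto_slope_zero_right.comp tendsto_step
  refine h1.congr' ?_
  have h2 : ∀ᶠ k in atTop, step k < 1 - s :=
    (tendsto_nhdsWithin_iff.1 tendsto_step).1.eventually (gt_mem_nhds (by linarith [hs.2]))
  filter_upwards [h2] with k hk
  have : s ∈ Iic (1 - step k) := by simp only [mem_Iic]; linarith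
  simp [fwd, indicator_of_mem this]

lemma aestronglyMeasurable_of_fwd (hG : Continuous fun p : ℝ × ℝ => G p.1 p.2)
    (hφ : ∀ s ∈ Ioo (0:ℝ) 1, HasDerivAt (fun b => G s b) (φ s) s) :
    AEStronglyMeasurable φ (volume.restrict (Ioo 0 1)) :=
  aestronglyMeasurable_of_tendsto_ae atTop
    (fun k => (measurable_fwd hG k).aestronglyMeasurable)
    (ae_restrict_of_forall_mem measurableSet_Ioo fun s hs => tendsto_fwd hs (hφ s hs))

/-- By Fatou's lemma the limit `φ` inherits the bound of the quotients on short intervals, and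
finitely many short intervals cover `[0,1]`. -/
lemma integrable_diag (hG : Continuous fun p : ℝ × ℝ => G p.1 p.2)
    (hφ : ∀ s ∈ Ioo (0:ℝ) 1, HasDerivAt (fun b => G s b) (φ s) s) (hUI : DiagUI G) :
    IntegrableOn φ (Ioo 0 1) := by
  obtain ⟨δ, hδ, h⟩ := hUI.lintegral_fwd_le one_pos
  have hmeas := aestronglyMeasurable_of_fwd hG hφ
  have hloc : LocallyIntegrableOn φ (Icc 0 1) (volume.restrict (Ioo 0 1)) := by
    intro x _
    refine ⟨Metric.ball x (δ / 4), mem_nhdsWithin_of_mem_nhds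
      (Metric.ball_mem_nhds x (by positivity)), hmeas.restrict, ?_⟩
    rw [Measure.restrict_restrict Metric.isOpen_ball.measurableSet]
    have hvol : volume (Metric.ball x (δ / 4) ∩ Ioo 0 1) < ENNReal.ofReal δ := by
      refine (measure_mono inter_subset_left).trans_lt ?_
      rw [Real.volume_ball]
      exact (ENNReal.ofReal_lt_ofReal_iff hδ).2 (by linarith)
    have hF : ∫⁻ s in Metric.ball x (δ / 4) ∩ Ioo 0 1, ‖φ s‖ₑ ≤ ENNReal.ofReal 1 := by
      calc ∫⁻ s in Metric.ball x (δ / 4) ∩ Ioo 0 1, ‖φ s‖ₑ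
          = ∫⁻ s in Metric.ball x (δ / 4) ∩ Ioo 0 1,
              liminf (fun k => ‖fwd G k s‖ₑ) atTop := by
            refine setLIntegral_congr_fun
              (Metric.isOpen_ball.measurableSet.inter measurableSet_Ioo) fun s hs => ?_
            exact (tendsto_fwd hs.2 (hφ s hs.2)).enorm.liminf_eq.symm
        _ ≤ liminf (fun k => ∫⁻ s in Metric.ball x (δ / 4) ∩ Ioo 0 1, ‖fwd G k s‖ₑ) atTop :=
            lintegral_liminf_le fun k => (measurable_fwd hG k).enorm
        _ ≤ liminf (fun _ : ℕ => ENNReal.ofReal 1) atTop :=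
            liminf_le_liminf (Eventually.of_forall fun k => h _ hvol k)
        _ = ENNReal.ofReal 1 := liminf_const _
    exact hF.trans_lt ENNReal.ofReal_lt_top
  have := hloc.integrableOn_isCompact isCompact_Icc
  rwa [IntegrableOn, Measure.restrict_restrict measurableSet_Icc,
    inter_eq_self_of_subset_right Ioo_subset_Icc_self] at this

/-- Vitali's convergence theorem for the forward quotients. -/
lemma tendsto_integral_fwd (hG : Continuous fun p : ℝ × ℝ => G p.1 p.2)
    (hφ : ∀ s ∈ Ioo (0:ℝ) 1, HasDerivAt (fun b => G s b) (φ s) s) (hUI : DiagUI G)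
    {r t : ℝ} (hr : 0 < r) (hrt : r ≤ t) (ht : t < 1) :
    Tendsto (fun k => ∫ s in r..t, fwd G k s) atTop (𝓝 (∫ s in r..t, φ s)) := by
  have hint := integrable_diag hG hφ hUI
  have hunif : UnifIntegrable (fwd G) 1 (volume.restrict (Ioo 0 1)) := by
    intro ε hε
    obtain ⟨δ, hδ, h⟩ := hUI.lintegral_fwd_le hε
    refine ⟨δ / 2, by positivity, fun k S hS hμ => ?_⟩
    rw [eLpNorm_indicator_eq_eLpNorm_restrict hS, eLpNorm_one_eq_lintegral_enorm,
      Measure.restrict_restrict hS]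
    rw [Measure.restrict_apply hS] at hμ
    exact h S (hμ.trans_lt ((ENNReal.ofReal_lt_ofReal_iff hδ).2 (by linarith))) k
  have hL1 := tendsto_Lp_finite_of_tendsto_ae le_rfl ENNReal.one_ne_top
    (fun k => (measurable_fwd hG k).aestronglyMeasurable) (memLp_one_iff_integrable.2 hint)
    hunif (ae_restrict_of_forall_mem measurableSet_Ioo fun s hs => tendsto_fwd hs (hφ s hs))
  have hfin : ∀ᶠ k in atTop, Integrable (fwd G k) (volume.restrict (Ioo 0 1)) := by
    filter_upwards [hL1.eventually (gt_mem_nhds ENNReal.zero_lt_top)] with k hk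
    have h1 : Integrable (fwd G k - φ) (volume.restrict (Ioo 0 1)) :=
      memLp_one_iff_integrable.1
        ⟨(measurable_fwd hG k).aestronglyMeasurable.sub hint.aestronglyMeasurable, hk⟩
    simpa using h1.add hint
  have := tendsto_setIntegral_of_L1' φ hint.aestronglyMeasurable hfin hL1 (Ioc r t)
  simp only [Measure.restrict_restrict measurableSet_Ioc,
    inter_eq_self_of_subset_left (show Ioc r t ⊆ Ioo 0 1 from
      fun s hs => ⟨hr.trans hs.1, hs.2.trans_lt ht⟩)] at this
  simpa only [intervalIntegral.integral_of_le hrt] using this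

/-! ### Difference quotients in the action -/

/-- The backward difference quotient of `G · s` at `s` with step `step k`. -/
noncomputable def bwd (G : ℝ → ℝ → ℝ) (k : ℕ) (s : ℝ) : ℝ :=
  (step k)⁻¹ * (G s s - G (s - step k) s)

lemma continuous_bwd (hG : Continuous fun p : ℝ × ℝ => G p.1 p.2) (k : ℕ) :
    Continuous (bwd G k) := by
  have h1 : Continuous fun s : ℝ => G (s - step k) s :=
    hG.comp ((continuous_id.sub continuous_const).prodMk continuous_id)
  have h2 : Continuous fun s : ℝ => G s s := hG.comp (continuous_id.prodMk continuous_id)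
  exact continuous_const.mul (h2.sub h1)

lemma abs_bwd_le (hC : ∀ a a' b, |G a b - G a' b| ≤ C * |a - a'|) (k : ℕ) (s : ℝ) :
    |bwd G k s| ≤ C := by
  have hm := step_pos k
  have := hC s (s - step k) s
  rw [sub_sub_cancel, abs_of_pos hm] at this
  rw [bwd, abs_mul, abs_of_pos (inv_pos.2 hm), inv_mul_le_iff₀ hm]
  linarith

lemma tendsto_bwd {s : ℝ} (h : HasDerivAt (fun a => G a s) (g s) s) :
    Tendsto (fun k => bwd G k s) atTop (𝓝 (g s)) := by
  have h0 : Tendsto (fun k => -step k) atTop (𝓝[<] 0) := by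
    have h1 := (tendsto_nhdsWithin_iff.1 tendsto_step).1.neg
    rw [neg_zero] at h1
    exact tendsto_nhdsWithin_iff.2 ⟨h1, Eventually.of_forall fun k => by
      simpa using step_pos k⟩
  refine (h.tendsto_slope_zero_left.comp h0).congr fun k => ?_
  simp only [Function.comp, bwd, smul_eq_mul, inv_neg, ← sub_eq_add_neg]
  ring

lemma integrable_action (hG : Continuous fun p : ℝ × ℝ => G p.1 p.2)
    (hC : ∀ a a' b, |G a b - G a' b| ≤ C * |a - a'|)
    (hg : ∀ᵐ s ∂(volume.restrict (Ioo (0:ℝ) 1)), HasDerivAt (fun a => G a s) (g s) s) :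
    IntegrableOn g (Ioo 0 1) := by
  refine Integrable.of_bound (C := C) (aestronglyMeasurable_of_tendsto_ae atTop
    (fun k => (continuous_bwd hG k).aestronglyMeasurable) (hg.mono fun s => tendsto_bwd)) ?_
  filter_upwards [hg] with s hs
  exact le_of_tendsto (tendsto_bwd hs).norm (Eventually.of_forall fun k => abs_bwd_le hC k s)

lemma tendsto_integral_bwd (hG : Continuous fun p : ℝ × ℝ => G p.1 p.2)
    (hC : ∀ a a' b, |G a b - G a' b| ≤ C * |a - a'|)
    (hg : ∀ᵐ s ∂(volume.restrict (Ioo (0:ℝ) 1)), HasDerivAt (fun a => G a s) (g s) s)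
    {r t : ℝ} (hr : 0 < r) (hrt : r ≤ t) (ht : t < 1) :
    Tendsto (fun k => ∫ s in r..t, bwd G k s) atTop (𝓝 (∫ s in r..t, g s)) := by
  refine intervalIntegral.tendsto_integral_filter_of_dominated_convergence (fun _ => C)
    (Eventually.of_forall fun k => (continuous_bwd hG k).aestronglyMeasurable)
    (Eventually.of_forall fun k => Eventually.of_forall fun s _ => abs_bwd_le hC k s)
    intervalIntegrable_const ?_
  filter_upwards [(ae_restrict_iff' measurableSet_Ioo).1 hg] with s hs hst
  rw [uIoc_of_le hrt] at hst
  exact tendsto_bwd (hs ⟨hr.trans hst.1, hst.2.trans_lt ht⟩)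

/-- Translating the interval of integration by `step k` changes the integral of a backward
quotient only by boundary terms of size `C * step k`. -/
lemma tendsto_integral_bwd_shift (hG : Continuous fun p : ℝ × ℝ => G p.1 p.2)
    (hC : ∀ a a' b, |G a b - G a' b| ≤ C * |a - a'|)
    (hg : ∀ᵐ s ∂(volume.restrict (Ioo (0:ℝ) 1)), HasDerivAt (fun a => G a s) (g s) s)
    {r t : ℝ} (hr : 0 < r) (hrt : r ≤ t) (ht : t < 1) :
    Tendsto (fun k => ∫ s in r..t, bwd G k (s + step k)) atTop (𝓝 (∫ s in r..t, g s)) := by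
  have hbd : ∀ u : ℝ, Tendsto (fun k => ∫ s in u..(u + step k), bwd G k s) atTop (𝓝 0) := by
    intro u
    refine squeeze_zero_norm (a := fun k => C * step k) (fun k => ?_) ?_
    · have := intervalIntegral.norm_integral_le_of_norm_le_const (a := u) (b := u + step k)
        (f := bwd G k) (C := C) fun s _ => abs_bwd_le hC k s
      rwa [add_sub_cancel_left, abs_of_pos (step_pos k)] at this
    · simpa using (tendsto_nhdsWithin_iff.1 tendsto_step).1.const_mul C
  have h := ((tendsto_integral_bwd hG hC hg hr hrt ht).add (hbd t)).sub (hbd r)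
  rw [add_zero, sub_zero] at h
  refine h.congr fun k => ?_
  have hi : ∀ a b, IntervalIntegrable (bwd G k) volume a b :=
    fun a b => (continuous_bwd hG k).intervalIntegrable a b
  rw [intervalIntegral.integral_comp_add_right,
    intervalIntegral.integral_add_adjacent_intervals (hi _ _) (hi _ _),
    ← intervalIntegral.integral_add_adjacent_intervals (hi r (r + step k)) (hi _ _)]
  ring

/-! ### The fundamental identity -/

lemma tendsto_integral_diag_quotient {V : ℝ → ℝ} (hV : Continuous V) (r t : ℝ) :
    Tendsto (fun k => ∫ s in r..t, (step k)⁻¹ * (V (s + step k) - V s)) atTop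
      (𝓝 (V t - V r)) := by
  have hi : ∀ a b, IntervalIntegrable V volume a b := fun a b => hV.intervalIntegrable a b
  have hd : ∀ u, Tendsto (fun k => (step k)⁻¹ * ∫ s in u..(u + step k), V s) atTop
      (𝓝 (V u)) := by
    intro u
    have h := (intervalIntegral.integral_hasDerivAt_right (hi u u)
      (hV.stronglyMeasurableAtFilter _ _) hV.continuousAt).tendsto_slope_zero_right.comp tendsto_step
    refine h.congr fun k => ?_
    simp
  refine ((hd t).sub (hd r)).congr fun k => ?_
  have hi' : IntervalIntegrable (fun s => V (s + step k)) volume r t :=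
    (hV.comp (continuous_id.add continuous_const)).intervalIntegrable _ _
  rw [intervalIntegral.integral_const_mul, intervalIntegral.integral_sub hi' (hi _ _),
    intervalIntegral.integral_comp_add_right, ← mul_sub]
  congr 1
  have h1 := intervalIntegral.integral_add_adjacent_intervals (hi r t) (hi t (t + step k))
  have h2 := intervalIntegral.integral_add_adjacent_intervals (hi r (r + step k))
    (hi (r + step k) (t + step k))
  linarith

/-- The increment of the value `s ↦ G s s` splits into a parameter part and an action part. In
`V (s + m) - V s = (G s (s + m) - G s s) + (G (s + m) (s + m) - G s (s + m))` the first bracket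
keeps the action fixed, so that its quotient converges pointwise; the quotient of the second is
a translated backward quotient in the action. -/
lemma diag_sub_eq_of_Ioo (hG : Continuous fun p : ℝ × ℝ => G p.1 p.2)
    (hC : ∀ a a' b, |G a b - G a' b| ≤ C * |a - a'|)
    (hφ : ∀ s ∈ Ioo (0:ℝ) 1, HasDerivAt (fun b => G s b) (φ s) s) (hUI : DiagUI G)
    (hg : ∀ᵐ s ∂(volume.restrict (Ioo (0:ℝ) 1)), HasDerivAt (fun a => G a s) (g s) s)
    {r t : ℝ} (hr : 0 < r) (hrt : r ≤ t) (ht : t < 1) :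
    G t t - G r r = (∫ s in r..t, φ s) + ∫ s in r..t, g s := by
  have hV : Continuous fun s : ℝ => G s s := hG.comp (continuous_id.prodMk continuous_id)
  refine tendsto_nhds_unique (tendsto_integral_diag_quotient hV r t) ?_
  refine ((tendsto_integral_fwd hG hφ hUI hr hrt ht).add
    (tendsto_integral_bwd_shift hG hC hg hr hrt ht)).congr' ?_
  have h2 : ∀ᶠ k in atTop, step k < 1 - t :=
    (tendsto_nhdsWithin_iff.1 tendsto_step).1.eventually (gt_mem_nhds (by linarith))
  filter_upwards [h2] with k hk
  have hc1 : Continuous fun s : ℝ => (step k)⁻¹ * (G s (s + step k) - G s s) :=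
    continuous_const.mul
      ((hG.comp (continuous_id.prodMk (continuous_id.add continuous_const))).sub hV)
  have hc2 : Continuous fun s : ℝ => bwd G k (s + step k) :=
    (continuous_bwd hG k).comp (continuous_id.add continuous_const)
  have hfwd : ∫ s in r..t, fwd G k s
      = ∫ s in r..t, (step k)⁻¹ * (G s (s + step k) - G s s) := by
    refine intervalIntegral.integral_congr fun s hs => ?_
    rw [uIcc_of_le hrt] at hs
    exact indicator_of_mem (show s ∈ Iic (1 - step k) by
      simp only [mem_Iic]; linarith [hs.2]) _
  rw [hfwd, ← intervalIntegral.integral_add (hc1.intervalIntegrable _ _)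
    (hc2.intervalIntegrable _ _)]
  refine intervalIntegral.integral_congr fun s _ => ?_
  simp only [bwd, add_sub_cancel_right]
  ring

lemma diag_eq (hG : Continuous fun p : ℝ × ℝ => G p.1 p.2)
    (hC : ∀ a a' b, |G a b - G a' b| ≤ C * |a - a'|)
    (hφ : ∀ s ∈ Ioo (0:ℝ) 1, HasDerivAt (fun b => G s b) (φ s) s) (hUI : DiagUI G)
    (hg : ∀ᵐ s ∂(volume.restrict (Ioo (0:ℝ) 1)), HasDerivAt (fun a => G a s) (g s) s)
    {t : ℝ} (ht : t ∈ Icc (0:ℝ) 1) :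
    G t t = G 0 0 + (∫ s in (0:ℝ)..t, φ s) + ∫ s in (0:ℝ)..t, g s := by
  have hV : Continuous fun s : ℝ => G s s := hG.comp (continuous_id.prodMk continuous_id)
  have hφi : IntegrableOn φ (Icc 0 1) :=
    (integrableOn_Icc_iff_integrableOn_Ioo).2 (integrable_diag hG hφ hUI)
  have hgi : IntegrableOn g (Icc 0 1) :=
    (integrableOn_Icc_iff_integrableOn_Ioo).2 (integrable_action hG hC hg)
  -- `E` is continuous on `[0,1]` and constant on `(0,1)`, hence constant on `[0,1]`.
  set E : ℝ → ℝ := fun t => G t t - (∫ s in (0:ℝ)..t, φ s) - ∫ s in (0:ℝ)..t, g s with hE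
  have hsub : ∀ {h : ℝ → ℝ}, IntegrableOn h (Icc 0 1) → ∀ {a b : ℝ}, a ∈ Icc (0:ℝ) 1 →
      b ∈ Icc (0:ℝ) 1 → IntervalIntegrable h volume a b := fun hh a b ha hb =>
    (hh.mono_set ((convex_Icc (0:ℝ) 1).ordConnected.uIcc_subset ha hb)).intervalIntegrable
  have hprim : ∀ {h : ℝ → ℝ}, IntegrableOn h (Icc 0 1) →
      ContinuousOn (fun t => ∫ s in (0:ℝ)..t, h s) (Icc 0 1) := fun hh => by
    have := intervalIntegral.continuousOn_primitive_interval (a := (0:ℝ)) (b := 1)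
      (by rwa [uIcc_of_le zero_le_one])
    rwa [uIcc_of_le zero_le_one] at this
  have hEc : ContinuousOn E (Icc 0 1) :=
    (hV.continuousOn.sub (hprim hφi)).sub (hprim hgi)
  have hle : ∀ r u : ℝ, 0 < r → r ≤ u → u < 1 → E u = E r := by
    intro r u hr hru hu
    have h := diag_sub_eq_of_Ioo hG hC hφ hUI hg hr hru hu
    have m0 : (0:ℝ) ∈ Icc (0:ℝ) 1 := ⟨le_rfl, zero_le_one⟩
    have mr : r ∈ Icc (0:ℝ) 1 := ⟨hr.le, by linarith⟩
    have mu : u ∈ Icc (0:ℝ) 1 := ⟨by linarith, hu.le⟩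
    have h1 := intervalIntegral.integral_add_adjacent_intervals (hsub hφi m0 mr) (hsub hφi mr mu)
    have h2 := intervalIntegral.integral_add_adjacent_intervals (hsub hgi m0 mr) (hsub hgi mr mu)
    simp only [hE]
    linarith
  have hconst : EqOn E (fun _ => E (1 / 2)) (Ioo 0 1) := by
    intro u hu
    rcases le_total u (1 / 2) with h | h
    · exact (hle u (1 / 2) hu.1 h (by norm_num)).symm
    · exact hle (1 / 2) u (by norm_num) h hu.2
  have hall : EqOn E (fun _ => E (1 / 2)) (Icc 0 1) :=
    hconst.of_subset_closure hEc continuousOn_const Ioo_subset_Icc_self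
      (by rw [closure_Ioo zero_ne_one])
  have h0 := hall (left_mem_Icc.2 zero_le_one)
  have h1 := hall ht
  simp only [hE, intervalIntegral.integral_same] at h0 h1
  linarith

/-- The envelope formula holds iff the action derivative along the diagonal vanishes a.e. -/
lemma envelope_iff (hG : Continuous fun p : ℝ × ℝ => G p.1 p.2)
    (hC : ∀ a a' b, |G a b - G a' b| ≤ C * |a - a'|)
    (hφ : ∀ s ∈ Ioo (0:ℝ) 1, HasDerivAt (fun b => G s b) (φ s) s) (hUI : DiagUI G)
    (hg : ∀ᵐ s ∂(volume.restrict (Ioo (0:ℝ) 1)), HasDerivAt (fun a => G a s) (g s) s) :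
    (∀ᵐ s ∂(volume.restrict (Ioo (0:ℝ) 1)), g s = 0) ↔
      (IntegrableOn φ (Icc (0:ℝ) 1) volume ∧
        ∀ t ∈ Icc (0:ℝ) 1, G t t = G 0 0 + ∫ s in (0:ℝ)..t, φ s) := by
  constructor
  · refine fun h => ⟨(integrableOn_Icc_iff_integrableOn_Ioo).2 (integrable_diag hG hφ hUI),
      fun t ht => ?_⟩
    have hz : ∫ s in (0:ℝ)..t, g s = 0 := by
      rw [intervalIntegral.integral_of_le ht.1, integral_Ioc_eq_integral_Ioo]
      exact integral_eq_zero_of_ae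
        (ae_restrict_of_ae_restrict_of_subset (Ioo_subset_Ioo_right ht.2) h)
    rw [diag_eq hG hC hφ hUI hg ht, hz, add_zero]
  · rintro ⟨-, h⟩
    have hz : ∀ t ∈ Icc (0:ℝ) 1, ∫ s in (0:ℝ)..t, g s = 0 := fun t ht => by
      have h1 := h t ht
      have h2 := diag_eq hG hC hφ hUI hg ht
      linarith
    have hgi : IntervalIntegrable g volume 0 1 :=
      (intervalIntegrable_iff_integrableOn_Ioo_of_le zero_le_one).2 (integrable_action hG hC hg)
    rw [ae_restrict_iff' measurableSet_Ioo]
    filter_upwards [hgi.ae_hasDerivAt_integral] with s hs hs01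
    have h1 := hs (by rw [uIcc_of_le zero_le_one]; exact Ioo_subset_Icc_self hs01) 0 (by simp)
    refine h1.unique ((hasDerivAt_const s (0:ℝ)).congr_of_eventuallyEq ?_)
    filter_upwards [Icc_mem_nhds hs01.1 hs01.2] with u hu using hz u hu

end Abstract

/-! ### Reduction to functions of two real variables -/

/-- The projection of the line onto `[0,1]`. -/
noncomputable def clamp (t : ℝ) : ℝ := projIcc (0:ℝ) 1 zero_le_one t

lemma clamp_mem (t : ℝ) : clamp t ∈ Icc (0:ℝ) 1 := (projIcc (0:ℝ) 1 zero_le_one t).2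

lemma clamp_of_mem {t : ℝ} (ht : t ∈ Icc (0:ℝ) 1) : clamp t = t := by
  unfold clamp; rw [projIcc_of_mem _ ht]

lemma continuous_clamp : Continuous clamp := continuous_subtype_val.comp continuous_projIcc

lemma abs_clamp_sub_le (s t : ℝ) : |clamp s - clamp t| ≤ |s - t| := abs_projIcc_sub_projIcc _

/-- A function of two variables that is Lipschitz in the first, uniformly in the second, and
continuous in the second is jointly continuous. -/
lemma continuous_of_lipschitz_left {G : ℝ → ℝ → ℝ} {C : ℝ}
    (hC : ∀ a a' b, |G a b - G a' b| ≤ C * |a - a'|) (hc : ∀ a, Continuous (G a)) :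
    Continuous fun p : ℝ × ℝ => G p.1 p.2 := by
  have h0 : 0 ≤ C := by
    have := (abs_nonneg _).trans (hC 1 0 0)
    simpa using this
  refine continuous_prod_of_continuous_lipschitzWith (fun p : ℝ × ℝ => G p.1 p.2) C.toNNReal
    hc fun b => ?_
  refine LipschitzWith.of_dist_le_mul fun a a' => ?_
  rw [Real.dist_eq, Real.dist_eq, Real.coe_toNNReal _ h0]
  exact hC a a' b

/-- **Classical envelope theorem and converse.** Let `𝒳` be a convex subset of `ℝⁿ` and
`f : 𝒳 × [0,1] → ℝ` satisfy the basic assumptions (differentiability in the parameter with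
derivative `f₂`, and absolute equi-continuity of `{f x ·}_{x ∈ 𝒳}`) and the classical
assumptions (the action derivative `f₁` exists and is bounded, and the decision rule
`X : [0,1] → 𝒳` is Lipschitz continuous). Then `X` satisfies the first-order condition a.e.
iff it satisfies the envelope formula. -/
theorem classical_envelope_theorem_and_converse
    {n : ℕ} {𝒳 : Set (EuclideanSpace ℝ (Fin n))} (hne : 𝒳.Nonempty) (hconv : Convex ℝ 𝒳)
    (f : EuclideanSpace ℝ (Fin n) → ℝ → ℝ) (f₂ : EuclideanSpace ℝ (Fin n) → ℝ → ℝ)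
    (hdiff : ∀ x ∈ 𝒳, ∀ t ∈ Icc (0:ℝ) 1, HasDerivWithinAt (f x) (f₂ x t) (Icc (0:ℝ) 1) t)
    (hequi : AbsolutelyEquicontinuous fun x : 𝒳 => f x.1)
    (f₁ : EuclideanSpace ℝ (Fin n) → ℝ → (EuclideanSpace ℝ (Fin n) →L[ℝ] ℝ))
    (hf₁ : ∀ x ∈ 𝒳, ∀ t ∈ Icc (0:ℝ) 1, HasFDerivWithinAt (fun y => f y t) (f₁ x t) 𝒳 x)
    (hf₁bdd : ∃ K : ℝ, ∀ x ∈ 𝒳, ∀ t ∈ Icc (0:ℝ) 1, ‖f₁ x t‖ ≤ K)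
    (X : ℝ → EuclideanSpace ℝ (Fin n))
    (hX𝒳 : ∀ t ∈ Icc (0:ℝ) 1, X t ∈ 𝒳)
    (hLip : ∃ L : NNReal, LipschitzOnWith L X (Icc (0:ℝ) 1)) :
    (∀ᵐ t ∂(volume.restrict (Ioo (0:ℝ) 1)),
        HasDerivAt (fun m : ℝ => f (X (t + m)) t) 0 0) ↔
    (IntegrableOn (fun s => f₂ (X s) s) (Icc (0:ℝ) 1) volume ∧
      ∀ t ∈ Icc (0:ℝ) 1, f (X t) t = f (X 0) 0 + ∫ s in (0:ℝ)..t, f₂ (X s) s) := by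
  obtain ⟨K, hK⟩ := hf₁bdd
  obtain ⟨L, hL⟩ := hLip
  have hK0 : 0 ≤ K := by
    obtain ⟨x, hx⟩ := hne
    exact (norm_nonneg _).trans (hK x hx 0 ⟨le_rfl, zero_le_one⟩)
  set G : ℝ → ℝ → ℝ := fun a b => f (X (clamp a)) (clamp b) with hGdef
  have hGeq : ∀ {a b : ℝ}, a ∈ Icc (0:ℝ) 1 → b ∈ Icc (0:ℝ) 1 → G a b = f (X a) b := by
    intro a b ha hb
    simp only [hGdef, clamp_of_mem ha, clamp_of_mem hb]
  have hC : ∀ a a' b, |G a b - G a' b| ≤ (K * L) * |a - a'| := by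
    intro a a' b
    have h1 := hconv.norm_image_sub_le_of_norm_hasFDerivWithin_le
      (fun x hx => hf₁ x hx _ (clamp_mem b)) (fun x hx => hK x hx _ (clamp_mem b))
      (hX𝒳 _ (clamp_mem a')) (hX𝒳 _ (clamp_mem a))
    have h2 := hL.dist_le_mul _ (clamp_mem a) _ (clamp_mem a')
    rw [dist_eq_norm, Real.dist_eq] at h2
    calc |G a b - G a' b| ≤ K * ‖X (clamp a) - X (clamp a')‖ := h1
      _ ≤ K * (L * |a - a'|) := by
          gcongr
          exact h2.trans (mul_le_mul_of_nonneg_left (abs_clamp_sub_le a a') L.2)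
      _ = (K * L) * |a - a'| := by ring
  have hG : Continuous fun p : ℝ × ℝ => G p.1 p.2 := by
    refine continuous_of_lipschitz_left hC fun a => ?_
    have hfc : ContinuousOn (f (X (clamp a))) (Icc 0 1) :=
      fun t ht => (hdiff _ (hX𝒳 _ (clamp_mem a)) t ht).continuousWithinAt
    exact hfc.comp_continuous continuous_clamp clamp_mem
  have hφ : ∀ s ∈ Ioo (0:ℝ) 1, HasDerivAt (fun b => G s b) (f₂ (X s) s) s := by
    intro s hs
    have hs' := Ioo_subset_Icc_self hs
    have hnhds := Icc_mem_nhds hs.1 hs.2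
    refine ((hdiff _ (hX𝒳 s hs') s hs').hasDerivAt hnhds).congr_of_eventuallyEq ?_
    filter_upwards [hnhds] with b hb using hGeq hs' hb
  have hUI : DiagUI G := by
    intro ε hε
    obtain ⟨δ, hδ, h⟩ := hequi ε hε
    refine ⟨δ, hδ, fun T hTo hT hTδ m hm => lt_of_le_of_lt ?_ (h T hTo hT hTδ m hm)⟩
    refine setLIntegral_mono' (hTo.measurableSet.inter ?_) fun t ht => ?_
    · exact measurableSet_Icc.inter ((measurable_id.add_const m) measurableSet_Icc)
    · rw [hGeq ht.2.1 ht.2.2, hGeq ht.2.1 ht.2.1]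
      exact le_iSup (fun x : 𝒳 => ENNReal.ofReal |(f x.1 (t + m) - f x.1 t) / m|)
        ⟨X t, hX𝒳 t ht.2.1⟩
  -- By Rademacher's theorem `X` is differentiable a.e., and there the chain rule applies.
  have hg : ∀ᵐ s ∂(volume.restrict (Ioo (0:ℝ) 1)),
      HasDerivAt (fun a => G a s) (f₁ (X s) s (deriv X s)) s := by
    rw [ae_restrict_iff' measurableSet_Ioo]
    filter_upwards [hL.ae_differentiableWithinAt_of_mem_real] with s hs hs01
    have hs' := Ioo_subset_Icc_self hs01
    have hnhds := Icc_mem_nhds hs01.1 hs01.2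
    have hX : HasDerivAt X (deriv X s) s := ((hs hs').differentiableAt hnhds).hasDerivAt
    have h1 := (hf₁ (X s) (hX𝒳 s hs') s hs').comp_hasDerivAt s hX
      (by filter_upwards [hnhds] with a ha using hX𝒳 a ha)
    refine h1.congr_of_eventuallyEq ?_
    filter_upwards [hnhds] with a ha using hGeq ha hs'
  have hfoc : (∀ᵐ t ∂(volume.restrict (Ioo (0:ℝ) 1)),
        HasDerivAt (fun m : ℝ => f (X (t + m)) t) 0 0) ↔
      ∀ᵐ s ∂(volume.restrict (Ioo (0:ℝ) 1)), f₁ (X s) s (deriv X s) = 0 := by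
    refine eventually_congr ?_
    filter_upwards [hg, ae_restrict_mem measurableSet_Ioo] with t ht ht01
    have ht' := Ioo_subset_Icc_self ht01
    have h1 : HasDerivAt (fun m : ℝ => f (X (t + m)) t) (f₁ (X t) t (deriv X t)) 0 := by
      have h2 : HasDerivAt (fun m : ℝ => G (t + m) t) (f₁ (X t) t (deriv X t)) 0 :=
        HasDerivAt.comp_const_add (f := fun a => G a t) t 0 (by simpa using ht)
      refine h2.congr_of_eventuallyEq ?_
      have hcont : Tendsto (fun m : ℝ => t + m) (𝓝 0) (𝓝 t) := by
        exact Continuous.tendsto' (by fun_prop) 0 t (add_zero t)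
      filter_upwards [hcont (Icc_mem_nhds ht01.1 ht01.2)] with m hm using (hGeq hm ht').symm
    exact ⟨fun h => h1.unique h, fun h => h ▸ h1⟩
  rw [hfoc, envelope_iff hG hC hφ hUI hg]
  have h0 : (0:ℝ) ∈ Icc (0:ℝ) 1 := ⟨le_rfl, zero_le_one⟩
  refine and_congr_right fun _ => forall₂_congr fun t ht => ?_
  rw [hGeq ht ht, hGeq h0 h0]
end

section
/- Existence for the envelope integral equation: Let φ, ψ : ℝ × [0,1] → ℝ. Suppose that for every t ∈ [0,1], p ↦ φ(p,t) is strictly decreasing, continuous and onto ℝ; that ψ is bounded and p ↦ ψ(p,t) is continuous for every t ∈ [0,1]; and that t ↦ φ(p,t) and t ↦ ψ(p,t) are Borel-measurable for each p ∈ ℝ. Then for any k ∈ ℝ there exists a function P : [0,1] → ℝ such that s ↦ ψ(P(s),s) is Lebesgue integrable and φ(P(t),t) = k + ∫₀ᵗ ψ(P(s),s) ds for every t ∈ [0,1]. -/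
/-!
For each `t` the map `φ(·,t)` is a decreasing bijection of `ℝ`, so it has an inverse `q(·,t)`, which
is continuous (monotone and onto) and measurable in `t`, since `{t | p ≤ q(x,t)} = {t | x ≤ φ(p,t)}`.
With `x(t) = φ(P(t),t)` the equation becomes `x(t) = k + ∫₀ᵗ F(x(s),s) ds`, where
`F(x,t) = ψ(q(x,t),t)` is bounded, continuous in `x` and measurable in `t`: an initial value problem
of Carathéodory type.

It is solved by Tonelli's delay scheme (`caratheodory_existence`). For `δ > 0` the delayed equation
`y(t) = k + ∫₀ᵗ F(y(s-δ),s) ds` has a solution on `[0,1]`: the iterates of the right-hand side,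
started at the constant `k`, stabilise on `(-∞, mδ]` after `m` steps. These solutions are all
Lipschitz with the bound of `F` as constant, so by Arzelà–Ascoli a sequence of them with `δ → 0`
converges uniformly on `[0,1]` along a subsequence, and dominated convergence shows that the limit
solves the equation without delay.
-/

open MeasureTheory Set Filter intervalIntegral
open scoped NNReal Topology

/-- The delayed integral operator `y ↦ k + ∫₀ᵗ F(y(s-δ),s) ds`, taken to be the constant `k` for
negative times so that the delayed argument `s - δ` always makes sense. -/
noncomputable def delayOp (F : ℝ → ℝ → ℝ) (k δ : ℝ) (y : ℝ → ℝ) (t : ℝ) : ℝ :=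
  k + ∫ s in (0:ℝ)..max t 0, F (y (s - δ)) s

lemma intervalIntegrable_caratheodory {F : ℝ → ℝ → ℝ} {K : ℝ≥0}
    (hc : ∀ t, Continuous fun x => F x t) (hm : ∀ x, Measurable (F x))
    (hb : ∀ x t, |F x t| ≤ K) {y : ℝ → ℝ} (hy : Measurable y) (a b : ℝ) :
    IntervalIntegrable (fun s => F (y s) s) volume a b := by
  have h1 : Measurable (Function.uncurry F) := measurable_uncurry_of_continuous_of_measurable hc hm
  have h2 : Measurable fun s => F (y s) s := h1.comp (hy.prodMk measurable_id)
  refine (intervalIntegrable_const (c := (K : ℝ))).mono_fun h2.aestronglyMeasurable ?_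
  filter_upwards with s
  simpa using hb (y s) s

lemma delayOp_lipschitz {F : ℝ → ℝ → ℝ} {K : ℝ≥0}
    (hc : ∀ t, Continuous fun x => F x t) (hm : ∀ x, Measurable (F x))
    (hb : ∀ x t, |F x t| ≤ K) (k δ : ℝ) {y : ℝ → ℝ} (hy : Measurable y) :
    LipschitzWith K (delayOp F k δ y) := by
  have hy' : Measurable fun s => y (s - δ) := hy.comp (measurable_id.sub_const δ)
  have hi := intervalIntegrable_caratheodory hc hm hb hy'
  refine LipschitzWith.of_dist_le_mul fun a b => ?_
  have h1 : delayOp F k δ y a - delayOp F k δ y b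
      = ∫ s in (max b 0)..(max a 0), F (y (s - δ)) s := by
    simp only [delayOp]
    rw [add_sub_add_left_eq_sub, integral_interval_sub_left (hi _ _) (hi _ _)]
  rw [Real.dist_eq, Real.dist_eq, h1]
  calc |∫ s in (max b 0)..(max a 0), F (y (s - δ)) s| ≤ (K : ℝ) * |max a 0 - max b 0| :=
        norm_integral_le_of_norm_le_const (f := fun s => F (y (s - δ)) s) fun s _ => hb _ _
    _ ≤ K * |a - b| := by
        exact mul_le_mul_of_nonneg_left (abs_max_sub_max_le_abs a b 0) K.2

lemma delayOp_iterate_lipschitz {F : ℝ → ℝ → ℝ} {K : ℝ≥0}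
    (hc : ∀ t, Continuous fun x => F x t) (hm : ∀ x, Measurable (F x))
    (hb : ∀ x t, |F x t| ≤ K) (k δ : ℝ) (m : ℕ) :
    LipschitzWith K ((delayOp F k δ)^[m] fun _ => k) := by
  induction m with
  | zero => exact LipschitzWith.const' k
  | succ m ih =>
    rw [Function.iterate_succ_apply']
    exact delayOp_lipschitz hc hm hb k δ ih.continuous.measurable

/-- Values on `(-∞, (m+1)δ]` of the right-hand side only involve values on `(-∞, mδ]`, so each
iteration settles one more interval of length `δ`. -/
lemma delayOp_iterate_stable (F : ℝ → ℝ → ℝ) (k δ : ℝ) (m : ℕ) :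
    ∀ t ≤ m * δ, (delayOp F k δ)^[m + 1] (fun _ => k) t = (delayOp F k δ)^[m] (fun _ => k) t := by
  induction m with
  | zero =>
    intro t ht
    have ht' : t ≤ 0 := by simpa using ht
    simp [delayOp, ht']
  | succ m ih =>
    intro t ht
    rw [Function.iterate_succ_apply' _ (m + 1), Function.iterate_succ_apply' _ m]
    change k + _ = k + _
    congr 1
    rcases le_total t 0 with h | h
    · simp [h]
    · rw [max_eq_left h]
      refine intervalIntegral.integral_congr fun s hs => ?_
      rw [uIcc_of_le h] at hs
      have hi := ih (s - δ) (by push_cast at ht; linarith [hs.2])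
      rw [Function.iterate_succ_apply'] at hi
      exact congrArg (F · s) hi

lemma exists_delay_solution {F : ℝ → ℝ → ℝ} {K : ℝ≥0}
    (hc : ∀ t, Continuous fun x => F x t) (hm : ∀ x, Measurable (F x))
    (hb : ∀ x t, |F x t| ≤ K) (k : ℝ) (n : ℕ) :
    ∃ y : ℝ → ℝ, LipschitzWith K y ∧ y 0 = k ∧
      ∀ t ∈ Icc (0:ℝ) 1, y t = k + ∫ s in (0:ℝ)..t, F (y (s - 1 / (n + 1))) s := by
  have key : ∀ t ∈ Icc (0:ℝ) 1, (delayOp F k (1 / (n + 1)))^[n + 1] (fun _ => k) t =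
      k + ∫ s in (0:ℝ)..t, F ((delayOp F k (1 / (n + 1)))^[n + 1] (fun _ => k)
        (s - 1 / (n + 1))) s := by
    intro t ht
    rw [← delayOp_iterate_stable F k (1 / (n + 1)) (n + 1) t,
      Function.iterate_succ_apply' _ (n + 1)]
    · conv_lhs => rw [delayOp, max_eq_left ht.1]
    · have : (0:ℝ) < n + 1 := by positivity
      push_cast
      rw [mul_one_div_cancel this.ne']
      exact ht.2
  refine ⟨(delayOp F k (1 / (n + 1)))^[n + 1] fun _ => k,
    delayOp_iterate_lipschitz hc hm hb k _ _, ?_, key⟩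
  rw [key 0 (by simp)]
  simp

/-- Arzelà–Ascoli for equi-Lipschitz sequences on `[0,1]` with a common initial value. -/
lemma exists_subseq_tendsto {K : ℝ≥0} {k : ℝ} (y : ℕ → ℝ → ℝ) (hy : ∀ n, LipschitzWith K (y n))
    (h0 : ∀ n, y n 0 = k) :
    ∃ (x : ℝ → ℝ) (σ : ℕ → ℕ), Continuous x ∧ StrictMono σ ∧
      ∀ t ∈ Icc (0:ℝ) 1, Tendsto (fun n => y (σ n) t) atTop (𝓝 (x t)) := by
  let A : Set (BoundedContinuousFunction (Icc (0:ℝ) 1) ℝ) :=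
    {u | LipschitzWith K u ∧ ∀ t, u t ∈ Metric.closedBall k K}
  have hA : IsCompact A := by
    refine BoundedContinuousFunction.arzela_ascoli₂ (Metric.closedBall k K)
      (isCompact_closedBall k K) A ?_ (fun u t hu => hu.2 t) ?_
    · have : A = (⋂ (a : Icc (0:ℝ) 1) (b : Icc (0:ℝ) 1), {u | dist (u a) (u b) ≤ K * dist a b}) ∩
          ⋂ t : Icc (0:ℝ) 1, {u | dist (u t) k ≤ K} := by
        ext u
        simp only [A, lipschitzWith_iff_dist_le_mul, Metric.mem_closedBall, mem_inter_iff,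
          mem_iInter, mem_ofPred_eq]
      rw [this]
      refine IsClosed.inter (isClosed_iInter fun a => isClosed_iInter fun b => ?_)
        (isClosed_iInter fun a => ?_)
      · exact isClosed_le ((continuous_eval_const a).dist
          (continuous_eval_const b)) continuous_const
      · exact isClosed_le ((continuous_eval_const a).dist
          continuous_const) continuous_const
    · exact (LipschitzWith.uniformEquicontinuous _ K fun u : A => u.2.1).equicontinuous
  let u : ℕ → BoundedContinuousFunction (Icc (0:ℝ) 1) ℝ := fun n =>
    BoundedContinuousFunction.mkOfCompact
      ⟨fun t => y n t, (hy n).continuous.comp continuous_subtype_val⟩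
  have hu : ∀ n, u n ∈ A := by
    intro n
    refine ⟨fun a b => hy n a b, fun t => ?_⟩
    rw [Metric.mem_closedBall]
    change dist (y n t) k ≤ K
    calc dist (y n t) k = dist (y n t) (y n 0) := by rw [h0]
      _ ≤ K * dist (t : ℝ) 0 := (hy n).dist_le_mul _ _
      _ ≤ K * 1 := by
        gcongr
        rw [Real.dist_eq, sub_zero, abs_of_nonneg t.2.1]
        exact t.2.2
      _ = K := mul_one _
  obtain ⟨v, -, σ, hσ, hv⟩ := hA.tendsto_subseq hu
  refine ⟨IccExtend zero_le_one v, σ, v.continuous.Icc_extend', hσ, fun t ht => ?_⟩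
  rw [IccExtend_of_mem _ _ ht]
  exact ((continuous_eval_const (⟨t, ht⟩ : Icc (0:ℝ) 1)).tendsto v).comp hv

/-- Carathéodory's existence theorem for a bounded right-hand side, in integral form. -/
lemma caratheodory_existence {F : ℝ → ℝ → ℝ} {K : ℝ≥0}
    (hc : ∀ t, Continuous fun x => F x t) (hm : ∀ x, Measurable (F x))
    (hb : ∀ x t, |F x t| ≤ K) (k : ℝ) :
    ∃ x : ℝ → ℝ, Continuous x ∧
      ∀ t ∈ Icc (0:ℝ) 1, x t = k + ∫ s in (0:ℝ)..t, F (x s) s := by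
  choose y hyL hy0 hy using exists_delay_solution hc hm hb k
  obtain ⟨x, σ, hx, hσ, hlim⟩ := exists_subseq_tendsto y hyL hy0
  refine ⟨x, hx, fun t ht => tendsto_nhds_unique (hlim t ht) ?_⟩
  simp_rw [fun n => hy n t ht]
  refine Tendsto.const_add k ?_
  refine tendsto_integral_filter_of_dominated_convergence (fun _ => (K : ℝ)) ?_ ?_ ?_ ?_
  · refine Eventually.of_forall fun n => ?_
    have hi := intervalIntegrable_caratheodory hc hm hb
      (y := fun s => y (σ n) (s - 1 / ((σ n : ℕ) + 1)))
      ((hyL (σ n)).continuous.measurable.comp (measurable_id.sub_const _)) 0 t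
    exact hi.def'.aestronglyMeasurable
  · exact Eventually.of_forall fun n => Eventually.of_forall fun s _ => hb _ _
  · exact intervalIntegrable_const
  · refine Eventually.of_forall fun s hs => ?_
    rw [uIoc_of_le ht.1] at hs
    refine ((hc s).tendsto (x s)).comp ?_
    -- the delay moves the argument by `1 / (σ n + 1)`, hence the value by at most `K / (σ n + 1)`
    refine (tendsto_iff_of_dist ?_).1 (hlim s ⟨hs.1.le, hs.2.trans ht.2⟩)
    have hz : Tendsto (fun n => (K : ℝ) * (1 / ((σ n : ℝ) + 1))) atTop (𝓝 0) := by
      simpa using (tendsto_one_div_add_atTop_nhds_zero_nat.comp hσ.tendsto_atTop).const_mul (K : ℝ)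
    refine squeeze_zero (fun _ => dist_nonneg) (fun n => ?_) hz
    refine ((hyL (σ n)).dist_le_mul _ _).trans (le_of_eq ?_)
    rw [Real.dist_eq, sub_sub_cancel, abs_of_nonneg (by positivity)]

/-- **Existence for the envelope integral equation.** Let `φ, ψ : ℝ × [0,1] → ℝ`. Suppose that
for every `t ∈ [0,1]`, `p ↦ φ(p,t)` is strictly decreasing, continuous and onto `ℝ`; that `ψ`
is bounded (on `ℝ × [0,1]`) and `p ↦ ψ(p,t)` is continuous for every `t ∈ [0,1]`; and that
`t ↦ φ(p,t)` and `t ↦ ψ(p,t)` are Borel-measurable on `[0,1]` for each `p`. Then for any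
`k ∈ ℝ` there is `P : [0,1] → ℝ` with `s ↦ ψ(P(s),s)` Lebesgue integrable and
`φ(P(t),t) = k + ∫₀ᵗ ψ(P(s),s) ds` for every `t ∈ [0,1]`. -/
theorem exists_solution_envelope_integral_equation
    (φ ψ : ℝ → ℝ → ℝ)
    (hanti : ∀ t ∈ Icc (0:ℝ) 1, StrictAnti fun p => φ p t)
    (hφcont : ∀ t ∈ Icc (0:ℝ) 1, Continuous fun p => φ p t)
    (hφsurj : ∀ t ∈ Icc (0:ℝ) 1, Function.Surjective fun p => φ p t)
    (hψbdd : ∃ K : ℝ, ∀ p : ℝ, ∀ t ∈ Icc (0:ℝ) 1, |ψ p t| ≤ K)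
    (hψcont : ∀ t ∈ Icc (0:ℝ) 1, Continuous fun p => ψ p t)
    (hφmeas : ∀ p : ℝ, Measurable fun t : Icc (0:ℝ) 1 => φ p t)
    (hψmeas : ∀ p : ℝ, Measurable fun t : Icc (0:ℝ) 1 => ψ p t)
    (k : ℝ) :
    ∃ P : ℝ → ℝ, IntegrableOn (fun s => ψ (P s) s) (Icc (0:ℝ) 1) volume ∧
      ∀ t ∈ Icc (0:ℝ) 1, φ (P t) t = k + ∫ s in (0:ℝ)..t, ψ (P s) s := by
  obtain ⟨K, hK⟩ := hψbdd
  have hK0 : 0 ≤ K := (abs_nonneg _).trans (hK 0 0 (by simp))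
  have hq : ∀ (x : ℝ) (t : Icc (0:ℝ) 1), ∃ p, φ p t = x := fun x t => hφsurj t t.2 x
  choose q hq using hq
  have hle : ∀ p x (t : Icc (0:ℝ) 1), p ≤ q x t ↔ x ≤ φ p t := fun p x t => by
    conv_rhs => rw [← hq x t]
    exact ((hanti t t.2).le_iff_ge).symm
  have hqcont : ∀ t : Icc (0:ℝ) 1, Continuous fun x => q x t := by
    intro t
    have hmono : Monotone fun x => -q x t := fun a b hab =>
      neg_le_neg ((hle _ _ _).2 (by rwa [hq b t]))
    have hsurj : Function.Surjective fun x => -q x t := fun p => by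
      refine ⟨φ (-p) t, ?_⟩
      have : q (φ (-p) t) t = -p := (hanti t t.2).injective (hq _ t)
      simp [this]
    exact (hmono.continuous_of_surjective hsurj).neg.congr fun x => neg_neg _
  have hqmeas : ∀ x, Measurable (q x) := by
    intro x
    refine measurable_of_Ici fun p => ?_
    have : q x ⁻¹' Ici p = {t : Icc (0:ℝ) 1 | x ≤ φ p t} := by
      ext t
      exact hle p x t
    rw [this]
    exact measurableSet_le measurable_const (hφmeas p)
  have hψu : Measurable (Function.uncurry fun (p : ℝ) (t : Icc (0:ℝ) 1) => ψ p t) :=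
    measurable_uncurry_of_continuous_of_measurable (fun t => hψcont t t.2) hψmeas
  classical
  let F : ℝ → ℝ → ℝ := fun x t => if h : t ∈ Icc (0:ℝ) 1 then ψ (q x ⟨t, h⟩) t else 0
  have hFc : ∀ t, Continuous fun x => F x t := by
    intro t
    by_cases h : t ∈ Icc (0:ℝ) 1
    · simp only [F, h, dite_true]
      exact (hψcont t h).comp (hqcont ⟨t, h⟩)
    · simp only [F, h, dite_false]
      exact continuous_const
  have hFm : ∀ x, Measurable (F x) := fun x =>
    Measurable.dite (s := Icc (0:ℝ) 1) (f := fun t => ψ (q x t) t) (g := fun _ => 0)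
      (hψu.comp ((hqmeas x).prodMk measurable_id)) measurable_const measurableSet_Icc
  have hFb : ∀ x t, |F x t| ≤ K.toNNReal := by
    intro x t
    rw [Real.coe_toNNReal K hK0]
    by_cases h : t ∈ Icc (0:ℝ) 1
    · simp only [F, h, dite_true]
      exact hK _ t h
    · simpa only [F, h, dite_false, abs_zero] using hK0
  obtain ⟨x, hx, hsol⟩ := caratheodory_existence hFc hFm hFb k
  have hF : ∀ s, ∀ h : s ∈ Icc (0:ℝ) 1, F (x s) s = ψ (q (x s) (projIcc 0 1 zero_le_one s)) s := by
    intro s h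
    simp only [F, h, dite_true, projIcc_of_mem]
  refine ⟨fun s => q (x s) (projIcc 0 1 zero_le_one s), ?_, fun t ht => ?_⟩
  · have hi := intervalIntegrable_caratheodory hFc hFm hFb hx.measurable 0 1
    rw [intervalIntegrable_iff_integrableOn_Icc_of_le zero_le_one] at hi
    exact hi.congr_fun hF measurableSet_Icc
  · have h1 : φ (q (x t) (projIcc 0 1 zero_le_one t)) t = x t := by
      rw [projIcc_of_mem _ ht]
      exact hq (x t) ⟨t, ht⟩
    rw [h1, hsol t ht]
    congr 1
    refine intervalIntegral.integral_congr fun s hs => ?_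
    rw [uIcc_of_le ht.1] at hs
    exact hF s ⟨hs.1, hs.2.trans ht.2⟩
end

section
/- Regularity of the Blackwell order: Let Ω be a nonempty finite set and μ₀ ∈ Δ(Ω), and let 𝒴 be the set of Borel probability measures y on Δ(Ω) with barycenter μ₀ (i.e. ∫_{Δ(Ω)} μ y(dμ) = μ₀), preordered by Blackwell informativeness: y ≲ y' iff ∫ v dy ≤ ∫ v dy' for every continuous convex v : Δ(Ω) → ℝ. Then ≲ is antisymmetric on 𝒴 (hence a partial order), and (𝒴, ≲) is order-dense-in-itself, countably chain-complete, and chain-separable. -/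
/-!
The proof works with the set `convexCont Ω` of continuous functions on the simplex `X = Δ(Ω)` that
come from a continuous convex function; `y ≲ y'` says that `∫ f dy ≤ ∫ f dy'` for all `f` in it.

* Antisymmetry: the functions `p ↦ exp ⟨c, p⟩` are continuous and convex, are closed under
  products, and separate points. By Stone–Weierstrass their linear span is dense in `C(X, ℝ)`, so
  the integrals of continuous convex functions determine a measure.
* Order-density: the midpoint of two strictly ranked measures lies strictly between them.
* Chain-completeness: the probability measures on the compact metrizable space `X` form a
  weak-* compact space. Along a chain, directed downwards (upwards), an ultrafilter
  converges to some `y`, and each `∫ f dy` is a limit of monotone integrals, which makes `y` the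
  infimum (supremum).
* Chain-separability: `C(X, ℝ)` is separable, so there is a sequence `f n` dense in `convexCont Ω`.
  The weighted sum of `∫ f n dy` is a strictly increasing real-valued function of `y`, so a chain
  is order isomorphic to a subset of `ℝ`, and those have countable order-dense subsets.
-/

open MeasureTheory Set

/-- The Blackwell informativeness preorder on Borel probability measures on the simplex
`Δ(Ω)`: `y ≲ y'` iff `∫ v dy ≤ ∫ v dy'` for every continuous convex `v : Δ(Ω) → ℝ`. -/
def BlackwellLE {Ω : Type*} [Fintype Ω]
    (y y' : ProbabilityMeasure ↥(stdSimplex ℝ Ω)) : Prop :=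
  ∀ v : (Ω → ℝ) → ℝ, ContinuousOn v (stdSimplex ℝ Ω) → ConvexOn ℝ (stdSimplex ℝ Ω) v →
    (∫ p, v ↑p ∂(y : Measure ↥(stdSimplex ℝ Ω))) ≤
      ∫ p, v ↑p ∂(y' : Measure ↥(stdSimplex ℝ Ω))

open Filter Topology

/-- The continuous functions on the simplex induced by functions on the ambient space that are
continuous and convex on the simplex. -/
def convexCont (Ω : Type*) [Fintype Ω] : Set C(↥(stdSimplex ℝ Ω), ℝ) :=
  {f | ∃ v : (Ω → ℝ) → ℝ, ContinuousOn v (stdSimplex ℝ Ω) ∧ ConvexOn ℝ (stdSimplex ℝ Ω) v ∧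
    ∀ p : ↥(stdSimplex ℝ Ω), f p = v p.1}

lemma blackwellLE_iff {Ω : Type*} [Fintype Ω] (y y' : ProbabilityMeasure ↥(stdSimplex ℝ Ω)) :
    BlackwellLE y y' ↔ ∀ f ∈ convexCont Ω,
      (∫ p, f p ∂(y : Measure ↥(stdSimplex ℝ Ω))) ≤
        ∫ p, f p ∂(y' : Measure ↥(stdSimplex ℝ Ω)) := by
  constructor
  · rintro h f ⟨v, hv, hv', hf⟩
    simp only [hf]
    exact h v hv hv'
  · intro h v hv hv'
    exact h ⟨fun p => v p.1, continuousOn_iff_continuous_domRestrict.1 hv⟩ ⟨v, hv, hv', fun _ => rfl⟩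

section Compact

variable {X : Type*} [TopologicalSpace X] [CompactSpace X] [MeasurableSpace X]

lemma abs_integral_le_norm (μ : Measure X) [IsProbabilityMeasure μ] (f : C(X, ℝ)) :
    |∫ x, f x ∂μ| ≤ ‖f‖ := by
  have := norm_integral_le_of_norm_le_const (μ := μ) (f := fun x => f x) (C := ‖f‖)
    (Eventually.of_forall fun x => f.norm_coe_le_norm x)
  simpa using this

/-- A sequence of continuous functions yields a functional on probability measures that strictly
increases as soon as all the integrals weakly increase and one of them strictly increases. -/
lemma exists_strict_functional (f : ℕ → C(X, ℝ)) :
    ∃ φ : ProbabilityMeasure X → ℝ, ∀ y y' : ProbabilityMeasure X,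
      (∀ n, (∫ x, f n x ∂(y : Measure X)) ≤ ∫ x, f n x ∂(y' : Measure X)) →
      (∃ n, (∫ x, f n x ∂(y : Measure X)) < ∫ x, f n x ∂(y' : Measure X)) → φ y < φ y' := by
  -- The factor `1 + ‖f n‖` normalises the integrals to be bounded by `1`.
  set w : ℕ → ℝ := fun n => (1 / 2) ^ n / (1 + ‖f n‖) with hw
  have hwpos : ∀ n, 0 < w n := fun n => by positivity
  have hs : ∀ y : ProbabilityMeasure X, Summable fun n => w n * ∫ x, f n x ∂(y : Measure X) := by
    intro y
    refine Summable.of_norm_bounded summable_geometric_two fun n => ?_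
    have h1 := abs_integral_le_norm (y : Measure X) (f n)
    have h2 : 0 < 1 + ‖f n‖ := by positivity
    rw [norm_mul, Real.norm_eq_abs, Real.norm_eq_abs, abs_of_pos (hwpos n), hw]
    dsimp only
    rw [div_mul_eq_mul_div, div_le_iff₀ h2]
    exact mul_le_mul_of_nonneg_left (by linarith) (by positivity)
  refine ⟨fun y => ∑' n, w n * ∫ x, f n x ∂(y : Measure X), fun y y' hle ⟨n, hn⟩ => ?_⟩
  exact Summable.tsum_lt_tsum (i := n)
    (fun m => mul_le_mul_of_nonneg_left (hle m) (hwpos m).le)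
    (mul_lt_mul_of_pos_left hn (hwpos n)) (hs y) (hs y')

variable [BorelSpace X]

lemma integrable_contMap (μ : Measure X) [IsProbabilityMeasure μ] (f : C(X, ℝ)) :
    Integrable (fun x => f x) μ := by
  refine Integrable.of_bound (C := ‖f‖) f.continuous.measurable.aestronglyMeasurable ?_
  exact Eventually.of_forall fun x => f.norm_coe_le_norm x

lemma continuous_integral_contMap (μ : Measure X) [IsProbabilityMeasure μ] :
    Continuous (fun f : C(X, ℝ) => ∫ x, f x ∂μ) := by
  refine LipschitzWith.continuous (K := 1) (LipschitzWith.of_dist_le_mul fun f g => ?_)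
  rw [Real.dist_eq, ← integral_sub (integrable_contMap μ f) (integrable_contMap μ g)]
  simpa [dist_eq_norm] using abs_integral_le_norm μ (f - g)

end Compact

/-- The convex continuous functions `p ↦ exp ⟨c, p⟩` on the simplex. -/
noncomputable def expFun {Ω : Type*} [Fintype Ω] (c : Ω → ℝ) : C(↥(stdSimplex ℝ Ω), ℝ) :=
  ⟨fun p => Real.exp (∑ ω, c ω * p.1 ω), Real.continuous_exp.comp <| continuous_finsetSum _
    fun ω _ => continuous_const.mul ((continuous_apply ω).comp continuous_subtype_val)⟩

lemma expFun_mem {Ω : Type*} [Fintype Ω] (c : Ω → ℝ) : expFun c ∈ convexCont Ω := by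
  refine ⟨fun p => Real.exp (∑ ω, c ω * p ω), by fun_prop, ?_, fun _ => rfl⟩
  let L : (Ω → ℝ) →ₗ[ℝ] ℝ := ∑ ω, c ω • LinearMap.proj ω
  have h := (convexOn_exp.comp_linearMap L).subset (subset_univ (stdSimplex ℝ Ω))
    (convex_stdSimplex ℝ Ω)
  have hL : (fun p : Ω → ℝ => Real.exp (∑ ω, c ω * p ω)) = Real.exp ∘ L := by
    funext p
    simp [L]
  rw [hL]
  exact h

/-- The integrals of continuous convex functions determine a probability measure. -/
lemma eq_of_integral_convexCont_eq {Ω : Type*} [Fintype Ω]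
    (y y' : ProbabilityMeasure ↥(stdSimplex ℝ Ω))
    (h : ∀ f ∈ convexCont Ω, (∫ p, f p ∂(y : Measure ↥(stdSimplex ℝ Ω))) =
        ∫ p, f p ∂(y' : Measure ↥(stdSimplex ℝ Ω))) : y = y' := by
  classical
  -- The exponentials already form a submonoid, so the algebra they generate is their span.
  let S : Submonoid C(↥(stdSimplex ℝ Ω), ℝ) :=
    { carrier := range expFun
      one_mem' := ⟨0, by ext p; simp [expFun]⟩
      mul_mem' := by
        rintro _ _ ⟨a, rfl⟩ ⟨b, rfl⟩
        exact ⟨a + b, by ext p; simp [expFun, add_mul, Finset.sum_add_distrib, Real.exp_add]⟩ }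
  let A := Algebra.adjoin ℝ (S : Set C(↥(stdSimplex ℝ Ω), ℝ))
  have hsep : A.SeparatesPoints := by
    intro p q hpq
    obtain ⟨ω, hω⟩ : ∃ ω, p.1 ω ≠ q.1 ω := by
      by_contra! hne
      exact hpq (Subtype.ext (funext hne))
    refine ⟨_, ⟨expFun (Pi.single ω 1), Algebra.subset_adjoin ⟨_, rfl⟩, rfl⟩, ?_⟩
    simpa [expFun, Pi.single_apply] using hω
  have hA : ∀ f ∈ A, (∫ p, f p ∂(y : Measure ↥(stdSimplex ℝ Ω))) =
        ∫ p, f p ∂(y' : Measure ↥(stdSimplex ℝ Ω)) := by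
    intro f hf
    have hf' : f ∈ Submodule.span ℝ (S : Set C(↥(stdSimplex ℝ Ω), ℝ)) := by
      rw [← Subalgebra.mem_toSubmodule, Algebra.adjoin_eq_span, Submonoid.closure_eq] at hf
      exact hf
    clear hf
    induction hf' using Submodule.span_induction with
    | mem f hf => obtain ⟨c, rfl⟩ := hf; exact h _ (expFun_mem c)
    | zero => simp
    | add f g _ _ hf hg =>
      simp only [ContinuousMap.add_apply]
      rw [integral_add (integrable_contMap _ f) (integrable_contMap _ g),
        integral_add (integrable_contMap _ f) (integrable_contMap _ g), hf, hg]
    | smul a f _ hf => simp only [ContinuousMap.smul_apply, integral_smul, hf]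
  have hall : ∀ f : C(↥(stdSimplex ℝ Ω), ℝ), (∫ p, f p ∂(y : Measure ↥(stdSimplex ℝ Ω))) =
        ∫ p, f p ∂(y' : Measure ↥(stdSimplex ℝ Ω)) := by
    intro f
    have hf : f ∈ closure (A : Set C(↥(stdSimplex ℝ Ω), ℝ)) := by
      rw [← Subalgebra.topologicalClosure_coe,
        ContinuousMap.subalgebra_topologicalClosure_eq_top_of_separatesPoints A hsep]
      trivial
    exact closure_minimal (t := {f : C(↥(stdSimplex ℝ Ω), ℝ) | (∫ p, f p ∂(y : Measure ↥(stdSimplex ℝ Ω))) =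
        ∫ p, f p ∂(y' : Measure ↥(stdSimplex ℝ Ω))}) hA
      (isClosed_eq (continuous_integral_contMap _) (continuous_integral_contMap _)) hf
  apply Subtype.ext
  exact ext_of_forall_integral_eq_of_IsFiniteMeasure (μ := (y : Measure ↥(stdSimplex ℝ Ω)))
    (ν := (y' : Measure ↥(stdSimplex ℝ Ω))) fun f => hall f.toContinuousMap

/-- The integral against the midpoint of two probability measures is the mean of the integrals. -/
lemma exists_midpoint {X : Type*} [TopologicalSpace X] [CompactSpace X] [MeasurableSpace X]
    [BorelSpace X] (y y' : ProbabilityMeasure X) : ∃ z : ProbabilityMeasure X, ∀ f : C(X, ℝ),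
      (∫ x, f x ∂(z : Measure X)) =
        ((∫ x, f x ∂(y : Measure X)) + ∫ x, f x ∂(y' : Measure X)) / 2 := by
  refine ⟨⟨(2⁻¹ : NNReal) • (y : Measure X) + (2⁻¹ : NNReal) • (y' : Measure X), ⟨?_⟩⟩, fun f => ?_⟩
  · simp [ENNReal.smul_def, ENNReal.inv_two_add_inv_two]
  · have h1 := (integrable_contMap (y : Measure X) f).smul_measure_nnreal (c := 2⁻¹)
    have h2 := (integrable_contMap (y' : Measure X) f).smul_measure_nnreal (c := 2⁻¹)
    rw [ProbabilityMeasure.coe_mk, integral_add_measure h1 h2, integral_smul_nnreal_measure,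
      integral_smul_nnreal_measure]
    simp only [NNReal.smul_def, smul_eq_mul]
    push_cast
    ring

/-- A chain `C` for a relation `r` with a strictly increasing real-valued function has a countable
order-dense set. -/
lemma exists_countable_order_dense {α : Type*} (r : α → α → Prop) (φ : α → ℝ)
    (hφ : ∀ a b, r a b → ¬ r b a → φ a < φ b) (C : Set α)
    (hC : ∀ a ∈ C, ∀ b ∈ C, r a b ∨ r b a) :
    ∃ B : Set α, B.Countable ∧ ∀ c ∈ C, ∀ c' ∈ C, r c c' ∧ ¬ r c' c → ∃ b ∈ B, r c b ∧ r b c' := by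
  rcases C.eq_empty_or_nonempty with rfl | ⟨c₀, -⟩
  · exact ⟨∅, countable_empty, by simp⟩
  have : Nonempty α := ⟨c₀⟩
  have hr : ∀ a ∈ C, ∀ b ∈ C, φ a ≤ φ b → r a b := by
    intro a ha b hb hab
    by_contra hn
    exact absurd (hφ b a ((hC a ha b hb).resolve_left hn) hn) (not_lt.2 hab)
  let P : ℚ × ℚ → α → Prop := fun q c => c ∈ C ∧ (q.1 : ℝ) < φ c ∧ φ c < q.2
  -- `Q q c` says that `φ c` is the largest value of `φ` on `C` below `q`: this catches the gaps.
  let Q : ℚ → α → Prop := fun q c => c ∈ C ∧ φ c < q ∧ ∀ d ∈ C, φ d < q → φ d ≤ φ c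
  refine ⟨range (fun q => Classical.epsilon (P q)) ∪ range (fun q => Classical.epsilon (Q q)),
    (countable_range _).union (countable_range _), ?_⟩
  rintro c hc c' hc' ⟨h1, h2⟩
  have hlt := hφ _ _ h1 h2
  by_cases hex : ∃ d ∈ C, φ c < φ d ∧ φ d < φ c'
  · obtain ⟨d, hd, hcd, hdc⟩ := hex
    obtain ⟨p, hp1, hp2⟩ := exists_rat_btwn hcd
    obtain ⟨q, hq1, hq2⟩ := exists_rat_btwn hdc
    obtain ⟨hb, hb1, hb2⟩ := Classical.epsilon_spec (p := P (p, q)) ⟨d, hd, hp2, hq1⟩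
    exact ⟨_, Or.inl ⟨(p, q), rfl⟩, hr _ hc _ hb (hp1.trans hb1).le,
      hr _ hb _ hc' (hb2.trans hq2).le⟩
  · push Not at hex
    obtain ⟨q, hq1, hq2⟩ := exists_rat_btwn hlt
    obtain ⟨hb, hb1, hb2⟩ := Classical.epsilon_spec (p := Q q) ⟨c, hc, hq1, fun d hd hdq => by
      by_contra! hcd
      exact absurd (hex d hd hcd) (not_le.2 (hdq.trans hq2))⟩
    exact ⟨_, Or.inr ⟨q, rfl⟩, hr _ hc _ hb (hb2 c hc hq1), hr _ hb _ hc' (hb1.trans hq2).le⟩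

/-- A nonempty chain for a transitive relation `r` carries an ultrafilter that contains each of
its initial segments: along it, the elements become arbitrarily `r`-small. -/
lemma exists_ultrafilter_of_chain {α : Type*} (r : α → α → Prop)
    (htrans : ∀ a b c, r a b → r b c → r a c) (C : Set α) (hne : C.Nonempty)
    (hC : ∀ a ∈ C, ∀ b ∈ C, r a b ∨ r b a) :
    ∃ U : Ultrafilter α, (∀ᶠ a in (U : Filter α), a ∈ C) ∧
      ∀ c ∈ C, ∀ᶠ a in (U : Filter α), r a c := by
  have hrefl : ∀ a ∈ C, r a a := fun a ha => (hC a ha a ha).elim id id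
  have : Nonempty C := hne.to_subtype
  have hdir : Directed (· ≥ ·) fun c : C => 𝓟 {a | a ∈ C ∧ r a c} := by
    rintro ⟨a, ha⟩ ⟨b, hb⟩
    rcases hC a ha b hb with h | h
    · exact ⟨⟨a, ha⟩, le_rfl, principal_mono.2 fun x hx => ⟨hx.1, htrans _ _ _ hx.2 h⟩⟩
    · exact ⟨⟨b, hb⟩, principal_mono.2 fun x hx => ⟨hx.1, htrans _ _ _ hx.2 h⟩, le_rfl⟩
  have hF : NeBot (⨅ c : C, 𝓟 {a | a ∈ C ∧ r a c}) :=
    iInf_neBot_of_directed' hdir fun c => principal_neBot_iff.2 ⟨c, c.2, hrefl c c.2⟩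
  have key : ∀ c ∈ C, ∀ᶠ a in (Ultrafilter.of (⨅ c : C, 𝓟 {a | a ∈ C ∧ r a c}) : Filter α),
      a ∈ C ∧ r a c := fun c hc =>
    (Ultrafilter.of_le _).trans (iInf_le _ (⟨c, hc⟩ : C)) (mem_principal_self _)
  obtain ⟨c, hc⟩ := hne
  exact ⟨_, (key c hc).mono fun _ h => h.1, fun c hc => (key c hc).mono fun _ h => h.2⟩

/-- **Regularity of the Blackwell order.** Let `Ω` be a nonempty finite set, `μ₀ ∈ Δ(Ω)`, and
`𝒴` the set of Borel probability measures on `Δ(Ω)` with barycenter `μ₀`, preordered by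
Blackwell informativeness. Then `≲` is antisymmetric on `𝒴` (hence a partial order), and `𝒴`
is order-dense-in-itself, countably chain-complete, and chain-separable. -/
theorem blackwell_order_regular
    {Ω : Type*} [Fintype Ω] [Nonempty Ω]
    (μ₀ : Ω → ℝ) (hμ₀ : μ₀ ∈ stdSimplex ℝ Ω) :
    let 𝒴 := {y : ProbabilityMeasure ↥(stdSimplex ℝ Ω) //
      ∀ ω : Ω, (∫ p, (p : Ω → ℝ) ω ∂(y : Measure ↥(stdSimplex ℝ Ω))) = μ₀ ω}
    let R : 𝒴 → 𝒴 → Prop := fun a b => BlackwellLE a.1 b.1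
    let lt : 𝒴 → 𝒴 → Prop := fun a b => R a b ∧ ¬ R b a
    -- antisymmetry:
    (∀ a b : 𝒴, R a b → R b a → a = b) ∧
    -- order-dense-in-itself:
    (∀ a a' : 𝒴, lt a a' → ∃ b : 𝒴, lt a b ∧ lt b a') ∧
    -- countable chain-completeness:
    (∀ C : Set 𝒴, (∀ a ∈ C, ∀ b ∈ C, R a b ∨ R b a) → C.Countable → C.Nonempty →
      ((∃ lb : 𝒴, ∀ c ∈ C, R lb c) →
        ∃ i : 𝒴, (∀ c ∈ C, R i c) ∧ ∀ lb : 𝒴, (∀ c ∈ C, R lb c) → R lb i) ∧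
      ((∃ ub : 𝒴, ∀ c ∈ C, R c ub) →
        ∃ s : 𝒴, (∀ c ∈ C, R c s) ∧ ∀ ub : 𝒴, (∀ c ∈ C, R c ub) → R s ub)) ∧
    -- chain-separability:
    (∀ C : Set 𝒴, (∀ a ∈ C, ∀ b ∈ C, R a b ∨ R b a) →
      ∃ B : Set 𝒴, B.Countable ∧ ∀ c ∈ C, ∀ c' ∈ C, lt c c' → ∃ b ∈ B, R c b ∧ R b c') := by
  intro 𝒴 R lt
  have hRiff : ∀ a b : 𝒴, R a b ↔ ∀ f ∈ convexCont Ω,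
      (∫ p, f p ∂(a.1 : Measure ↥(stdSimplex ℝ Ω))) ≤
        ∫ p, f p ∂(b.1 : Measure ↥(stdSimplex ℝ Ω)) := fun a b => blackwellLE_iff a.1 b.1
  have htrans : ∀ a b c : 𝒴, R a b → R b c → R a c := fun a b c h1 h2 v hv hv' =>
    (h1 v hv hv').trans (h2 v hv hv')
  let coord : Ω → C(↥(stdSimplex ℝ Ω), ℝ) := fun ω =>
    ⟨fun p => p.1 ω, (continuous_apply ω).comp continuous_subtype_val⟩
  -- By weak-* compactness, every ultrafilter on `𝒴` converges; the barycenter passes to the limit.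
  have hlim : ∀ U : Ultrafilter 𝒴, ∃ y : 𝒴, ∀ f : C(↥(stdSimplex ℝ Ω), ℝ),
      Tendsto (fun a : 𝒴 => ∫ p, f p ∂(a.1 : Measure ↥(stdSimplex ℝ Ω))) U
        (𝓝 (∫ p, f p ∂(y.1 : Measure ↥(stdSimplex ℝ Ω)))) := by
    intro U
    obtain ⟨y, -, hy⟩ := isCompact_univ.ultrafilter_le_nhds (U.map (fun a : 𝒴 => a.1)) (by simp)
    have hT : ∀ f : C(↥(stdSimplex ℝ Ω), ℝ),
        Tendsto (fun a : 𝒴 => ∫ p, f p ∂(a.1 : Measure ↥(stdSimplex ℝ Ω))) U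
          (𝓝 (∫ p, f p ∂(y : Measure ↥(stdSimplex ℝ Ω)))) := fun f =>
      (ProbabilityMeasure.tendsto_iff_forall_integral_tendsto (F := (U : Filter 𝒴))).1 hy
        (BoundedContinuousFunction.mkOfCompact f)
    refine ⟨⟨y, fun ω => ?_⟩, hT⟩
    exact tendsto_nhds_unique (hT (coord ω))
      (tendsto_const_nhds.congr fun a : 𝒴 => (a.2 ω).symm)
  refine ⟨?_, ?_, ?_, ?_⟩
  · intro a b hab hba
    exact Subtype.ext (eq_of_integral_convexCont_eq _ _ fun f hf =>
      le_antisymm ((hRiff a b).1 hab f hf) ((hRiff b a).1 hba f hf))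
  · rintro a a' ⟨h1, h2⟩
    obtain ⟨z, hz⟩ := exists_midpoint a.1 a'.1
    have hzb : ∀ ω : Ω, (∫ p, (p : Ω → ℝ) ω ∂(z : Measure ↥(stdSimplex ℝ Ω))) = μ₀ ω := by
      intro ω
      have e1 : (∫ p, coord ω p ∂(a.1 : Measure ↥(stdSimplex ℝ Ω))) = μ₀ ω := a.2 ω
      have e2 : (∫ p, coord ω p ∂(a'.1 : Measure ↥(stdSimplex ℝ Ω))) = μ₀ ω := a'.2 ω
      have e3 := hz (coord ω)
      rw [e1, e2] at e3
      exact e3.trans (by ring)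
    rw [hRiff] at h1 h2
    refine ⟨⟨z, hzb⟩, ⟨?_, fun h => h2 fun f hf => ?_⟩, ⟨?_, fun h => h2 fun f hf => ?_⟩⟩
    · rw [hRiff]
      intro f hf
      have := h1 f hf
      have := hz f
      dsimp only
      linarith
    · have := (hRiff _ _).1 h f hf
      have := hz f
      dsimp only at *
      linarith
    · rw [hRiff]
      intro f hf
      have := h1 f hf
      have := hz f
      dsimp only
      linarith
    · have := (hRiff _ _).1 h f hf
      have := hz f
      dsimp only at *
      linarith
  · intro C hC _ hne
    refine ⟨fun _ => ?_, fun _ => ?_⟩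
    · obtain ⟨U, hU, hUc⟩ := exists_ultrafilter_of_chain R htrans C hne hC
      obtain ⟨y, hy⟩ := hlim U
      refine ⟨y, fun c hc => (hRiff _ _).2 fun f hf => ?_, fun lb hlb => (hRiff _ _).2 fun f hf => ?_⟩
      · exact le_of_tendsto (hy f) ((hUc c hc).mono fun a ha => (hRiff _ _).1 ha f hf)
      · exact ge_of_tendsto (hy f) (hU.mono fun a ha => (hRiff _ _).1 (hlb a ha) f hf)
    · obtain ⟨U, hU, hUc⟩ := exists_ultrafilter_of_chain (fun a b => R b a)
        (fun a b c h1 h2 => htrans _ _ _ h2 h1) C hne (fun a ha b hb => hC b hb a ha)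
      obtain ⟨y, hy⟩ := hlim U
      refine ⟨y, fun c hc => (hRiff _ _).2 fun f hf => ?_, fun ub hub => (hRiff _ _).2 fun f hf => ?_⟩
      · exact ge_of_tendsto (hy f) ((hUc c hc).mono fun a ha => (hRiff _ _).1 ha f hf)
      · exact le_of_tendsto (hy f) (hU.mono fun a ha => (hRiff _ _).1 (hub a ha) f hf)
  · intro C hC
    have hneK : Nonempty (convexCont Ω) := ⟨⟨_, expFun_mem 0⟩⟩
    obtain ⟨u, hu⟩ := TopologicalSpace.exists_dense_seq (convexCont Ω)
    obtain ⟨φ, hφ⟩ := exists_strict_functional fun n => (u n).1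
    refine exists_countable_order_dense R (fun a => φ a.1) (fun a b hab hba => ?_) C hC
    refine hφ _ _ (fun n => (hRiff a b).1 hab _ (u n).2) ?_
    by_contra! hcon
    refine hba ((hRiff b a).2 fun f hf => ?_)
    -- The reverse inequality holds on the dense sequence, hence on all of `convexCont Ω`.
    have hclosed : IsClosed {g : convexCont Ω |
        (∫ p, g.1 p ∂(b.1 : Measure ↥(stdSimplex ℝ Ω))) ≤
          ∫ p, g.1 p ∂(a.1 : Measure ↥(stdSimplex ℝ Ω))} :=
      isClosed_le ((continuous_integral_contMap _).comp continuous_subtype_val)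
        ((continuous_integral_contMap _).comp continuous_subtype_val)
    have hsub := closure_minimal (range_subset_iff.2 hcon) hclosed
    exact hsub (hu (⟨f, hf⟩ : convexCont Ω))
end
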